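/- (Claim 1 in the proof of the Avalanche Principle.) Let X be a metric space and δ ≥ 0 such that X satisfies Gromov's 4-point condition with constant δ, i.e. ⟨x, z⟩_w ≥ min(⟨x, y⟩_w, ⟨y, z⟩_w) − δ for all x, y, z, w ∈ X. Let n ≥ 2, let x_0, x_1, …, x_n be points of X, and let ρ, σ > 0 be constants such that: (G) d(x_{i-1}, x_i) ≥ ρ for all i = 1, …, n; (A) ⟨x_{i-1}, x_{i+1}⟩_{x_i} ≤ σ for all i = 1, …, n−1; (P) 2σ < ρ − 2δ. Then for every k with 2 ≤ k ≤ n, |⟨x_0, x_k⟩_{x_{k-1}} − ⟨x_{k-2}, x_k⟩_{x_{k-1}}| ≤ δ. -/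

import Mathlib

/-!
The proof is by induction on `k`; for `k = 2` the two Gromov products coincide. If the estimate
holds for `k`, then `⟨x₀, x_k⟩_{x_{k-1}} ≤ σ + δ` by the angle condition. The identity
`⟨a, b⟩_c + ⟨a, c⟩_b = d(b, c)` and the gap condition then give
`⟨x₀, x_{k-1}⟩_{x_k} ≥ ρ - σ - δ > σ + δ ≥ ⟨x_{k-1}, x_{k+1}⟩_{x_k} + δ`.
So among the three Gromov products of `x₀, x_{k-1}, x_{k+1}` based at `x_k`, one exceeds another by
more than `δ`, and the 4-point condition forces the two smallest to be within `δ` of each other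
(`abs_gromovProd_sub_le`), which is the estimate for `k + 1`.
-/

open Real

/-- The Gromov product `⟨x, z⟩_w` of `x` and `z` with respect to basepoint `w`. -/
noncomputable def gromovProd {X : Type*} [MetricSpace X] (w x z : X) : ℝ :=
  (dist x w + dist w z - dist x z) / 2

theorem gromovProd_add_gromovProd {X : Type*} [MetricSpace X] (a b c : X) :
    gromovProd c a b + gromovProd b a c = dist b c := by
  unfold gromovProd
  rw [dist_comm c b]
  ring

/-- The "isosceles" form of the 4-point condition: if `⟨a, b⟩_w` exceeds `⟨b, c⟩_w` by more
than `δ`, then `⟨a, c⟩_w` and `⟨b, c⟩_w` differ by at most `δ`. -/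
theorem abs_gromovProd_sub_le {X : Type*} [MetricSpace X] {δ : ℝ}
    (hX : ∀ x y z w : X,
      gromovProd w x z ≥ min (gromovProd w x y) (gromovProd w y z) - δ)
    (a b c w : X) (hδ : 0 ≤ δ) (h : gromovProd w b c + δ < gromovProd w a b) :
    |gromovProd w a c - gromovProd w b c| ≤ δ := by
  have hlow := hX a b c w
  have hupp := hX b a c w
  have hsymm : gromovProd w b a = gromovProd w a b := by
    unfold gromovProd
    rw [dist_comm b w, dist_comm w a, dist_comm b a]
    ring
  rw [hsymm] at hupp
  rw [min_eq_right (by linarith)] at hlow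
  rw [abs_le]
  refine ⟨by linarith, ?_⟩
  rcases min_choice (gromovProd w a b) (gromovProd w a c) with hmin | hmin <;>
    rw [hmin] at hupp <;> linarith

theorem avalanche_claim1 {X : Type*} [MetricSpace X] (δ : ℝ) (hδ : 0 ≤ δ)
    (hX : ∀ x y z w : X,
      gromovProd w x z ≥ min (gromovProd w x y) (gromovProd w y z) - δ)
    (n : ℕ) (hn : 2 ≤ n) (x : ℕ → X) (ρ σ : ℝ) (hρ : 0 < ρ) (hσ : 0 < σ)
    (hG : ∀ i, 1 ≤ i → i ≤ n → ρ ≤ dist (x (i - 1)) (x i))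
    (hA : ∀ i, 1 ≤ i → i ≤ n - 1 → gromovProd (x i) (x (i - 1)) (x (i + 1)) ≤ σ)
    (hP : 2 * σ < ρ - 2 * δ) :
    ∀ k, 2 ≤ k → k ≤ n →
      |gromovProd (x (k - 1)) (x 0) (x k) - gromovProd (x (k - 1)) (x (k - 2)) (x k)| ≤ δ := by
  intro k hk
  induction k, hk using Nat.le_induction with
  | base => intro _; simpa using hδ
  | succ k hk ih =>
    intro hkn
    obtain ⟨m, rfl⟩ := Nat.exists_eq_add_of_le' hk
    have hstep := ih (by omega)
    have hgap := hG (m + 2) (by omega) (by omega)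
    have hprev := hA (m + 1) (by omega) (by omega)
    have hcur := hA (m + 2) (by omega) (by omega)
    have e1 : m + 2 - 1 = m + 1 := rfl
    have e2 : m + 2 - 2 = m := rfl
    have e3 : m + 2 + 1 - 1 = m + 2 := rfl
    have e4 : m + 2 + 1 - 2 = m + 1 := rfl
    have e5 : m + 1 - 1 = m := rfl
    have e6 : m + 1 + 1 = m + 2 := rfl
    rw [e1, e2] at hstep
    rw [e1] at hgap hcur
    rw [e5, e6] at hprev
    rw [e3, e4]
    have hsum := gromovProd_add_gromovProd (x 0) (x (m + 1)) (x (m + 2))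
    rw [abs_le] at hstep
    refine abs_gromovProd_sub_le hX (x 0) (x (m + 1)) (x (m + 2 + 1)) (x (m + 2)) hδ ?_
    linarith [hstep.2]
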